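/- Assume θ_+ = 1 and suppose there is a vector v ∈ R^d \ {0} such that: (a) ν-almost surely there exists N ≥ 1 with C_o ∩ {y ∈ Z^d : y·v < −N} = ∅, and (b) μ(∃ e ∈ G_o with v·e > 0) > 0. Then P(liminf_{n→∞} X_n·v = ∞) = 1, i.e. the random walk is P-almost surely transient in direction v. -/

import Mathlib

/-!
The proof rests on Lévy's zero–one law (`levy_path`): if at each time at which an event `R n`
occurs the conditional probability of `E` given the first `n` steps is at least a fixed `c > 0`,
then `E` occurs almost surely once `R n` occurs infinitely often. It is used three times.

* A site visited infinitely often passes this property on along the edges of the directed graph.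
  Forward clusters are infinite by stationarity, so the walk visits infinitely many sites
  (`IsRWRE.ae_range_infinite`).
* Say that the walk is at a record in direction `u` if it stands strictly further in direction `u`
  than ever before. The environment at and beyond a record is independent of the past, so whatever
  the walk does from there without going back behind the record has the same probability as from
  the origin (`IsRWRE.restart`). By (b) some unit vector `e` with `e·v > 0` is an allowed step with
  positive probability. If a coordinate orthogonal to `e` is unbounded along the walk, the walk has
  infinitely many records in the direction of that coordinate, and hence at one of them climbs `m`
  steps `e` in a row, for every `m` (`IsRWRE.ae_climb`). Since heights `X_n·v` are bounded below by
  (a), this contradicts a bound on the heights from above. If all those coordinates and the heights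
  are bounded, the range of the walk is finite. So the heights are unbounded above.
* Therefore there are infinitely many records in direction `v` above any level. With positive
  probability the walk never goes below its starting height (`IsRWRE.stay_above_pos`), so it
  eventually stays above any given level (`IsRWRE.ae_stay_above`).
-/

open MeasureTheory Filter Set Topology
open scoped Classical ENNReal

noncomputable section

/-- Lattice sites of `ℤ^d`. -/
abbrev Site (d : ℕ) := Fin d → ℤ

/-- The `2d` unit vectors `±e_i` of `ℤ^d`, indexed by `Fin d × Bool`
(`true` for `+e_i`, `false` for `-e_i`). -/
def stepVec (d : ℕ) (i : Fin d × Bool) : Site d :=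
  if i.2 = true then Pi.single i.1 1 else -Pi.single i.1 1

/-- An element of `𝒫`: a probability measure on the set `E` of unit vectors of `ℤ^d`,
recorded via its probability mass function on lattice vectors. -/
structure EnvDist (d : ℕ) where
  prob : Site d → ℝ
  nonneg : ∀ v, 0 ≤ prob v
  support : ∀ v, prob v ≠ 0 → ∃ i, v = stepVec d i
  total : ∑ i : Fin d × Bool, prob (stepVec d i) = 1

instance {d : ℕ} : MeasurableSpace (EnvDist d) :=
  MeasurableSpace.comap EnvDist.prob inferInstance

/-- Environments: an element of `𝒫` at every site. -/
abbrev EnvOmega (d : ℕ) := Site d → EnvDist d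

/-- Path space for the walk. -/
abbrev PathSpace (d : ℕ) := ℕ → Site d

/-- Sample space for the annealed walk: environment together with path. -/
abbrev RWSpace (d : ℕ) := EnvOmega d × PathSpace d

/-- Dot product of a lattice vector with a real vector. -/
def dotR {d : ℕ} (x : Site d) (l : Fin d → ℝ) : ℝ := ∑ i, (x i : ℝ) * l i

/-- Dot product of two lattice vectors. -/
def dotZ {d : ℕ} (x y : Site d) : ℤ := ∑ i, x i * y i

/-- Quenched probability that the walk follows the steps of `x` for its first `n` steps. -/
def pathWeight {d : ℕ} (ω : EnvOmega d) (n : ℕ) (x : ℕ → Site d) : ℝ :=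
  ∏ k ∈ Finset.range n, (ω (x k)).prob (x (k + 1) - x k)

/-- `ν` is the product measure `μ^{⊗ℤ^d}`, i.e. the coordinates are i.i.d. with law `μ`. -/
def IsIIDEnv {d : ℕ} (μ : Measure (EnvDist d)) (ν : Measure (EnvOmega d)) : Prop :=
  IsProbabilityMeasure μ ∧ IsProbabilityMeasure ν ∧
    ∀ (s : Finset (Site d)) (A : Site d → Set (EnvDist d)),
      (∀ x ∈ s, MeasurableSet (A x)) →
      ν {ω | ∀ x ∈ s, ω x ∈ A x} = ∏ x ∈ s, μ (A x)

/-- `P` is the annealed law of the RWRE started at the origin in an i.i.d. environment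
with marginal `μ`: the environment marginal is the i.i.d. product, and the cylinder
probabilities are given by averaging the quenched Markov-chain probabilities. -/
def IsRWRE {d : ℕ} (μ : Measure (EnvDist d)) (P : Measure (RWSpace d)) : Prop :=
  IsProbabilityMeasure P ∧ IsIIDEnv μ (P.map Prod.fst) ∧
    ∀ (n : ℕ) (x : ℕ → Site d) (A : Set (EnvOmega d)), MeasurableSet A →
      (P {q | q.1 ∈ A ∧ ∀ k ≤ n, q.2 k = x k}).toReal =
        (if x 0 = 0 then (1 : ℝ) else 0) * ∫ ω in A, pathWeight ω n x ∂(P.map Prod.fst)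

/-- `Q` is the quenched law `ℙ_ω` of the walk in the fixed environment `ω`, started at the
origin. -/
def IsQuenchedRW {d : ℕ} (ω : EnvOmega d) (Q : Measure (PathSpace d)) : Prop :=
  IsProbabilityMeasure Q ∧
    ∀ (n : ℕ) (x : ℕ → Site d),
      (Q {w | ∀ k ≤ n, w k = x k}).toReal =
        (if x 0 = 0 then (1 : ℝ) else 0) * pathWeight ω n x

/-- `x → y`: there is a directed path from `x` to `y` in the graph `G(ω)`. -/
def Reaches {d : ℕ} (ω : EnvOmega d) : Site d → Site d → Prop :=
  Relation.ReflTransGen (fun a b => 0 < (ω a).prob (b - a))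

/-- The forward cluster `C_x`. -/
def clusterC {d : ℕ} (ω : EnvOmega d) (x : Site d) : Set (Site d) := {y | Reaches ω x y}

/-- The mutually connected cluster `M_x = C_x ∩ B_x`. -/
def clusterM {d : ℕ} (ω : EnvOmega d) (x : Site d) : Set (Site d) :=
  {y | Reaches ω x y ∧ Reaches ω y x}

/-- The local drift `u = ∑_e γ(e) e` of an environment value `γ`. -/
def drift {d : ℕ} (γ : EnvDist d) : Fin d → ℝ :=
  fun i => ∑ k : Fin d × Bool, γ.prob (stepVec d k) * ((stepVec d k i : ℤ) : ℝ)

/-- `N_n`: the number of times before time `n` at which the walk sits on a site whose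
environment equals `γ`. -/
def envCount {d : ℕ} (γ : EnvDist d) (q : RWSpace d) (n : ℕ) : ℕ :=
  Set.ncard {m : ℕ | m < n ∧ q.1 (q.2 m) = γ}

end

open ProbabilityTheory

/-! ### Lévy's zero–one law on path space -/

/-- The set of paths that agree with `x` up to time `n`. -/
def cyl {S : Type*} (n : ℕ) (x : ℕ → S) : Set (ℕ → S) := {w | ∀ k ≤ n, w k = x k}

lemma mem_cyl_self {S : Type*} (n : ℕ) (x : ℕ → S) : x ∈ cyl n x := fun _ _ => rfl

lemma measurableSet_cyl {S : Type*} [MeasurableSpace S] [MeasurableSingletonClass S]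
    (n : ℕ) (x : ℕ → S) : MeasurableSet (cyl n x) := by
  have : cyl n x = ⋂ k ∈ Set.Iic n, (fun w : ℕ → S => w k) ⁻¹' {x k} := by
    ext w; simp [cyl]
  rw [this]
  exact MeasurableSet.biInter (Set.to_countable _)
    fun k _ => (measurable_pi_apply k) (measurableSet_singleton _)

lemma cyl_eq_preimage {S : Type*} (n : ℕ) (x : ℕ → S) :
    cyl n x = Preorder.restrictLe (π := fun _ => S) n ⁻¹' {Preorder.restrictLe n x} := by
  ext w
  simp only [cyl, Set.mem_ofPred_eq, Set.mem_preimage, Set.mem_singleton_iff, funext_iff]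
  constructor
  · rintro h ⟨k, hk⟩; exact h k hk
  · intro h k hk; exact h ⟨k, hk⟩

/-- An inequality between two path measures on cylinders of length `n` extends to all sets
determined by the first `n` steps, since these are countable disjoint unions of cylinders. -/
lemma le_of_cyl {S : Type*} [Countable S] [MeasurableSpace S] [MeasurableSingletonClass S]
    (Q₁ Q₂ : Measure (ℕ → S)) (n : ℕ) (c : ℝ≥0∞) (T : Set (ℕ → S))
    (hT : ∀ w w', w' ∈ cyl n w → w ∈ T → w' ∈ T)
    (h : ∀ x ∈ T, c * Q₁ (cyl n x) ≤ Q₂ (cyl n x)) : c * Q₁ T ≤ Q₂ T := by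
  set f : (ℕ → S) → (Set.Iic n → S) := Preorder.restrictLe (π := fun _ => S) n
  have hT' : T = f ⁻¹' (f '' T) := by
    refine (Set.subset_preimage_image _ _).antisymm ?_
    rintro w ⟨w', hw', he⟩
    refine hT w' w ?_ hw'
    rw [cyl_eq_preimage]
    exact he.symm
  have hc : (f '' T).Countable := Set.to_countable _
  have hm : ∀ y ∈ f '' T, MeasurableSet (f ⁻¹' {y}) := by
    rintro _ ⟨x, _, rfl⟩
    have := measurableSet_cyl n x
    rwa [cyl_eq_preimage] at this
  rw [hT', ← tsum_measure_preimage_singleton hc hm, ← tsum_measure_preimage_singleton hc hm,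
    ← ENNReal.tsum_mul_left]
  refine ENNReal.tsum_le_tsum ?_
  rintro ⟨_, x, hx, rfl⟩
  have := h x hx
  rwa [cyl_eq_preimage] at this

/-- Finite path segments generate the σ-algebra on paths. -/
lemma iSup_piLE {S : Type*} [MeasurableSpace S] :
    (⨆ n, (Filtration.piLE (X := fun _ : ℕ => S)) n) = MeasurableSpace.pi := by
  refine le_antisymm (iSup_le fun n => Filtration.piLE.le n) ?_
  refine iSup_le fun i => ?_
  refine le_trans ?_ (le_iSup _ i)
  have : (fun w : ℕ → S => w i) =
      (fun u : Set.Iic i → S => u ⟨i, Set.mem_Iic.2 le_rfl⟩) ∘ Preorder.restrictLe (π := fun _ => S) i := rfl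
  change MeasurableSpace.comap (fun w : ℕ → S => w i) _ ≤ _
  rw [this, ← MeasurableSpace.comap_comp]
  exact MeasurableSpace.comap_mono (measurable_pi_apply _).comap_le

/-- Second Borel–Cantelli lemma in the form given by Lévy's zero–one law: if at each time `n` at
which `R n` (known at time `n`) occurs, the event `E` has conditional probability at least `c`,
then `E` occurs almost surely on the event that `R n` occurs infinitely often. -/
lemma levy_path {S : Type*} [Countable S] [MeasurableSpace S] [MeasurableSingletonClass S]
    (Q : Measure (ℕ → S)) [IsFiniteMeasure Q] (E : Set (ℕ → S)) (hE : MeasurableSet E)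
    (R : ℕ → Set (ℕ → S)) (hR : ∀ n w w', w' ∈ cyl n w → w ∈ R n → w' ∈ R n)
    (c : ℝ≥0∞) (hc0 : c ≠ 0) (hc : c ≠ ∞) (n₀ : ℕ)
    (h : ∀ n ≥ n₀, ∀ x ∈ R n, c * Q (cyl n x) ≤ Q (E ∩ cyl n x)) :
    ∀ᵐ w ∂Q, (∃ᶠ n in atTop, w ∈ R n) → w ∈ E := by
  set ℱ := Filtration.piLE (X := fun _ : ℕ => S)
  set g : (ℕ → S) → ℝ := E.indicator (fun _ => (1 : ℝ))
  have hgm : StronglyMeasurable g := stronglyMeasurable_const.indicator hE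
  have hgi : Integrable g Q := (integrable_const (1 : ℝ)).indicator hE
  have hlim := tendsto_ae_condExp (μ := Q) (ℱ := ℱ) g
  have hsup : (⨆ n, ℱ n) = MeasurableSpace.pi := iSup_piLE
  have hcond : Q[g | ⨆ n, ℱ n] = g := by
    rw [hsup]
    exact condExp_of_stronglyMeasurable le_rfl hgm hgi
  rw [hcond] at hlim
  have hlow : ∀ n ≥ n₀, ∀ᵐ w ∂Q, w ∈ R n → c.toReal ≤ (Q[g | ℱ n]) w := by
    intro n hn
    -- the bad set `Z` is known at time `n`; averaging over it shows that it is null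
    set Z : Set (ℕ → S) := {w | w ∈ R n ∧ (Q[g | ℱ n]) w < c.toReal}
    have hRm : MeasurableSet[ℱ n] (R n) := by
      set f : (ℕ → S) → (Set.Iic n → S) := Preorder.restrictLe (π := fun _ => S) n
      refine ⟨f '' R n, (Set.to_countable _).measurableSet, ?_⟩
      refine Set.Subset.antisymm ?_ (Set.subset_preimage_image _ _)
      rintro w ⟨w', hw', he⟩
      refine hR n w' w ?_ hw'
      rw [cyl_eq_preimage]
      exact he.symm
    have hZm : MeasurableSet[ℱ n] Z := by
      refine MeasurableSet.inter hRm ?_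
      have hm : Measurable[ℱ n] (Q[g | ℱ n]) := stronglyMeasurable_condExp.measurable
      exact hm (measurableSet_Iio (a := c.toReal))
    have hZm' : MeasurableSet Z := ℱ.le n _ hZm
    have hZcyl : ∀ w w', w' ∈ cyl n w → w ∈ Z → w' ∈ Z := by
      obtain ⟨T, _, hT⟩ := hZm
      intro w w' hww hw
      rw [cyl_eq_preimage] at hww
      rw [← hT] at hw ⊢
      change Preorder.restrictLe n w' ∈ T
      rw [show Preorder.restrictLe n w' = Preorder.restrictLe n w from hww]
      exact hw
    have hZE : c * Q Z ≤ Q (E ∩ Z) := by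
      have := le_of_cyl Q (Q.restrict E) n c Z hZcyl (fun x hx => by
        rw [Measure.restrict_apply (measurableSet_cyl n x), Set.inter_comm]
        exact h n hn x hx.1)
      rwa [Measure.restrict_apply hZm', Set.inter_comm] at this
    have hint : ∫ w in Z, (Q[g | ℱ n]) w ∂Q = Q.real (E ∩ Z) := by
      rw [setIntegral_condExp (ℱ.le n) hgi hZm, setIntegral_indicator hE, Set.inter_comm]
      simp
    have hge : c.toReal * Q.real Z ≤ ∫ w in Z, (Q[g | ℱ n]) w ∂Q := by
      rw [hint, Measure.real, Measure.real, ← ENNReal.toReal_mul]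
      exact ENNReal.toReal_mono (measure_ne_top _ _) hZE
    have hZ0 : Q Z = 0 := by
      by_contra hne
      have hlt : 0 < ∫ w in Z, (c.toReal - (Q[g | ℱ n]) w) ∂Q := by
        rw [setIntegral_pos_iff_support_of_nonneg_ae]
        · refine lt_of_lt_of_le (pos_iff_ne_zero.2 hne) (measure_mono fun w hw => ⟨?_, hw⟩)
          exact (sub_pos.2 hw.2).ne'
        · filter_upwards [ae_restrict_mem hZm'] with w hw
          exact (sub_pos.2 hw.2).le
        · exact ((integrable_const _).sub integrable_condExp).integrableOn
      rw [integral_sub (integrable_const _) integrable_condExp.integrableOn] at hlt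
      simp only [integral_const, measureReal_restrict_apply_univ, smul_eq_mul] at hlt
      linarith
    have : ∀ᵐ w ∂Q, w ∉ Z := measure_eq_zero_iff_ae_notMem.1 hZ0
    filter_upwards [this] with w hw hwR
    by_contra hlt
    exact hw ⟨hwR, not_le.1 hlt⟩
  have hlow' : ∀ᵐ w ∂Q, ∀ n ≥ n₀, w ∈ R n → c.toReal ≤ (Q[g | ℱ n]) w := by
    rw [ae_all_iff]
    intro n
    by_cases hn : n₀ ≤ n
    · filter_upwards [hlow n hn] with w hw _ using hw
    · exact Eventually.of_forall fun w h' => absurd h' hn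
  filter_upwards [hlim, hlow'] with w hw hwl hfr
  by_contra hwE
  have hg0 : g w = 0 := by simp [g, hwE]
  rw [hg0] at hw
  have hpos : 0 < c.toReal := ENNReal.toReal_pos hc0 hc
  obtain ⟨n, hnR, hnlt, hn⟩ :=
    (hfr.and_eventually ((hw.eventually (gt_mem_nhds hpos)).and (eventually_ge_atTop n₀))).exists
  exact absurd hnlt (not_lt.2 (hwl n hn hnR))

/-! ### The environment -/

lemma measurable_prob {d : ℕ} (s : Site d) : Measurable fun γ : EnvDist d => γ.prob s :=
  (measurable_pi_apply s).comp (comap_measurable EnvDist.prob)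

lemma EnvDist.prob_le_one {d : ℕ} (γ : EnvDist d) (s : Site d) : γ.prob s ≤ 1 := by
  by_cases h : γ.prob s = 0
  · simp [h]
  · obtain ⟨i, rfl⟩ := γ.support s h
    rw [← γ.total]
    exact Finset.single_le_sum (f := fun i => γ.prob (stepVec d i))
      (fun j _ => γ.nonneg _) (Finset.mem_univ i)

lemma measurable_pathWeight {d : ℕ} (n : ℕ) (x : ℕ → Site d) :
    Measurable fun ω : EnvOmega d => pathWeight ω n x :=
  Finset.measurable_prod _ fun _ _ => (measurable_prob _).comp (measurable_pi_apply _)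

lemma pathWeight_nonneg {d : ℕ} (ω : EnvOmega d) (n : ℕ) (x : ℕ → Site d) :
    0 ≤ pathWeight ω n x := Finset.prod_nonneg fun _ _ => (ω _).nonneg _

lemma pathWeight_le_one {d : ℕ} (ω : EnvOmega d) (n : ℕ) (x : ℕ → Site d) :
    pathWeight ω n x ≤ 1 :=
  Finset.prod_le_one (fun _ _ => (ω _).nonneg _) fun _ _ => (ω _).prob_le_one _

lemma pathWeight_congr {d : ℕ} {ω ω' : EnvOmega d} {n : ℕ} {x x' : ℕ → Site d}
    (hω : ∀ k < n, ω (x k) = ω' (x k)) (hx : ∀ k ≤ n, x k = x' k) :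
    pathWeight ω n x = pathWeight ω' n x' := by
  refine Finset.prod_congr rfl fun k hk => ?_
  have hk := Finset.mem_range.1 hk
  rw [hω k hk, hx k hk.le, hx (k + 1) hk]

lemma pathWeight_add {d : ℕ} (ω : EnvOmega d) (n m : ℕ) (x : ℕ → Site d) :
    pathWeight ω (n + m) x = pathWeight ω n x * pathWeight ω m fun j => x (n + j) := by
  simp only [pathWeight, Finset.prod_range_add, add_assoc]

lemma dotR_add {d : ℕ} (x y : Site d) (l : Fin d → ℝ) :
    dotR (x + y) l = dotR x l + dotR y l := by
  simp [dotR, add_mul, Finset.sum_add_distrib]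

lemma dotR_zero {d : ℕ} (l : Fin d → ℝ) : dotR (0 : Site d) l = 0 := by simp [dotR]

lemma dotR_nsmul {d : ℕ} (k : ℕ) (x : Site d) (l : Fin d → ℝ) :
    dotR (k • x) l = k * dotR x l := by
  simp [dotR, Finset.mul_sum, mul_assoc]

/-- The environment seen from `a`. -/
def shiftEnv {d : ℕ} (a : Site d) (ω : EnvOmega d) : EnvOmega d := fun x => ω (x + a)

lemma reaches_shiftEnv {d : ℕ} (a : Site d) (ω : EnvOmega d) (x y : Site d) :
    Reaches (shiftEnv a ω) x y ↔ Reaches ω (x + a) (y + a) := by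
  constructor
  · intro h
    refine Relation.ReflTransGen.lift (fun z => z + a) (fun b c hbc => ?_) _ _ h
    simpa [shiftEnv, Function.onFun] using hbc
  · intro h
    have := Relation.ReflTransGen.lift (p := fun b c => 0 < (shiftEnv a ω b).prob (c - b))
      (fun z => z - a) (fun b c hbc => ?_) _ _ h
    · simpa [Reaches, Function.onFun] using this
    · simpa [shiftEnv, Function.onFun] using hbc

lemma measurableSet_reaches {d : ℕ} (x y : Site d) :
    MeasurableSet {ω : EnvOmega d | Reaches ω x y} := by
  -- `T n z` is the set of environments with a directed path of length `n` from `x` to `z`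
  let T : ℕ → Site d → Set (EnvOmega d) := fun n => Nat.rec (fun z => {_ω | z = x})
    (fun _ T z => ⋃ b, T b ∩ {ω | 0 < (ω b).prob (z - b)}) n
  have hTm : ∀ n z, MeasurableSet (T n z) := by
    intro n
    induction n with
    | zero => intro z; exact MeasurableSet.const _
    | succ n ih =>
      intro z
      refine MeasurableSet.iUnion fun b => (ih b).inter ?_
      exact ((measurable_prob _).comp (measurable_pi_apply b)) measurableSet_Ioi
  have hT : {ω : EnvOmega d | Reaches ω x y} = ⋃ n, T n y := by
    ext ω
    simp only [Set.mem_ofPred_eq, Set.mem_iUnion]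
    constructor
    · intro h
      induction h with
      | refl => exact ⟨0, rfl⟩
      | tail _ hbc ih =>
        obtain ⟨n, hn⟩ := ih
        exact ⟨n + 1, Set.mem_iUnion.2 ⟨_, hn, hbc⟩⟩
    · rintro ⟨n, hn⟩
      induction n generalizing y with
      | zero => cases (show y = x from hn); exact Relation.ReflTransGen.refl
      | succ n ih =>
        obtain ⟨b, hb, hby⟩ := Set.mem_iUnion.1 hn
        exact Relation.ReflTransGen.tail (ih b hb) hby
  rw [hT]
  exact MeasurableSet.iUnion fun n => hTm n y

lemma measurableSet_cluster_infinite {d : ℕ} (x : Site d) :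
    MeasurableSet {ω : EnvOmega d | (clusterC ω x).Infinite} := by
  have : {ω : EnvOmega d | (clusterC ω x).Infinite} =
      ⋂ F : Finset (Site d), ⋃ y : Site d, {ω | Reaches ω x y ∧ y ∉ F} := by
    ext ω
    simp only [Set.mem_ofPred_eq, Set.mem_iInter, Set.mem_iUnion]
    constructor
    · intro h F
      obtain ⟨y, hy, hyF⟩ := h.exists_notMem_finset F
      exact ⟨y, hy, hyF⟩
    · intro h hfin
      obtain ⟨y, hy, hyF⟩ := h hfin.toFinset
      exact hyF (hfin.mem_toFinset.2 hy)
  rw [this]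
  exact MeasurableSet.iInter fun F => MeasurableSet.iUnion fun y =>
    (measurableSet_reaches x y).inter (MeasurableSet.const _)

/-- For a property of sites, the event that the whole forward cluster of `x` has it. -/
lemma measurableSet_cluster_forall {d : ℕ} (x : Site d) (p : Site d → Prop) :
    MeasurableSet {ω : EnvOmega d | ∀ y ∈ clusterC ω x, p y} := by
  have : {ω : EnvOmega d | ∀ y ∈ clusterC ω x, p y} =
      ⋂ y : Site d, {ω | Reaches ω x y}ᶜ ∪ {_ω | p y} := by
    ext ω
    simp only [clusterC, Set.mem_ofPred_eq, Set.mem_iInter, Set.mem_union, Set.mem_compl_iff,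
      imp_iff_not_or]
  rw [this]
  exact MeasurableSet.iInter fun y =>
    (measurableSet_reaches x y).compl.union (MeasurableSet.const _)

lemma measurableSet_cluster_bounded {d : ℕ} (v : Fin d → ℝ) :
    MeasurableSet {ω : EnvOmega d |
      ∃ N : ℕ, 1 ≤ N ∧ ∀ y ∈ clusterC ω 0, -(N : ℝ) ≤ dotR y v} := by
  have : {ω : EnvOmega d | ∃ N : ℕ, 1 ≤ N ∧ ∀ y ∈ clusterC ω 0, -(N : ℝ) ≤ dotR y v} =
      ⋃ N : ℕ, {_ω | 1 ≤ N} ∩ {ω | ∀ y ∈ clusterC ω 0, -(N : ℝ) ≤ dotR y v} := by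
    ext ω; simp
  rw [this]
  exact MeasurableSet.iUnion fun N =>
    (MeasurableSet.const _).inter (measurableSet_cluster_forall 0 _)

namespace IsIIDEnv

variable {d : ℕ} {μ : Measure (EnvDist d)} {ν : Measure (EnvOmega d)}

lemma eval_apply (h : IsIIDEnv μ ν) (x : Site d) {A : Set (EnvDist d)} (hA : MeasurableSet A) :
    ν ((fun ω => ω x) ⁻¹' A) = μ A := by
  have := h.2.2 {x} (fun _ => A) (fun _ _ => hA)
  simp only [Finset.mem_singleton, forall_eq, Finset.prod_singleton] at this
  exact this

lemma measurePreserving_shift (h : IsIIDEnv μ ν) (a : Site d) :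
    MeasurePreserving (shiftEnv a) ν ν := by
  have := h.1
  have := h.2.1
  have hm : Measurable (shiftEnv a : EnvOmega d → EnvOmega d) :=
    measurable_pi_lambda _ fun x => measurable_pi_apply _
  refine ⟨hm, ?_⟩
  have h1 : ν = Measure.infinitePi fun _ : Site d => μ := by
    refine Measure.eq_infinitePi _ fun s t ht => ?_
    rw [← h.2.2 s t fun x _ => ht x]
    rfl
  have h2 : ν.map (shiftEnv a) = Measure.infinitePi fun _ : Site d => μ := by
    refine Measure.eq_infinitePi _ fun s t ht => ?_
    rw [Measure.map_apply hm (MeasurableSet.pi s.countable_toSet fun _ _ => ht _)]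
    have := h.2.2 (s.map (addRightEmbedding a)) (fun y => t (y - a)) fun y _ => ht _
    rw [Finset.prod_map] at this
    simp only [addRightEmbedding_apply, add_sub_cancel_right] at this
    rw [← this]
    congr 1
    ext ω
    simp [shiftEnv, Set.mem_pi]
  rw [h2, ← h1]

lemma iIndep (h : IsIIDEnv μ ν) :
    iIndep (fun x : Site d => MeasurableSpace.comap (fun ω : EnvOmega d => ω x) inferInstance)
      ν := by
  change iIndepFun (fun (x : Site d) (ω : EnvOmega d) => ω x) ν
  rw [iIndepFun_iff_measure_inter_preimage_eq_mul]
  intro s A hA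
  have := h.2.2 s A hA
  rw [Finset.prod_congr rfl fun x hx => h.eval_apply x (hA x hx), ← this]
  congr 1
  ext ω
  simp

/-- Functions of the environment on two disjoint sets of sites are independent. -/
lemma lintegral_mul (h : IsIIDEnv μ ν) (S T : Set (Site d)) (hST : Disjoint S T)
    (f g : EnvOmega d → ℝ≥0∞) (hf : Measurable f) (hg : Measurable g)
    (hfS : ∀ ω ω', (∀ x ∈ S, ω x = ω' x) → f ω = f ω')
    (hgT : ∀ ω ω', (∀ x ∈ T, ω x = ω' x) → g ω = g ω') :
    ∫⁻ ω, f ω * g ω ∂ν = (∫⁻ ω, f ω ∂ν) * ∫⁻ ω, g ω ∂ν := by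
  have := h.2.1
  obtain ⟨ω₀⟩ : Nonempty (EnvOmega d) := nonempty_of_isProbabilityMeasure ν
  let m : Site d → MeasurableSpace (EnvOmega d) :=
    fun x => MeasurableSpace.comap (fun ω : EnvOmega d => ω x) inferInstance
  have hle : ∀ x, m x ≤ MeasurableSpace.pi := fun x => (measurable_pi_apply x).comap_le
  -- freezing the environment outside `U` shows that a function depending on the sites in `U`
  -- is measurable for the σ-algebra these sites generate
  have key : ∀ (U : Set (Site d)) (f : EnvOmega d → ℝ≥0∞), Measurable f →
      (∀ ω ω', (∀ x ∈ U, ω x = ω' x) → f ω = f ω') → Measurable[⨆ x ∈ U, m x] f := by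
    intro U f hf hU
    have he : f = f ∘ fun ω x => if x ∈ U then ω x else ω₀ x := by
      funext ω
      exact hU _ _ fun x hx => by simp [hx]
    rw [he]
    refine hf.comp ?_
    refine @measurable_pi_lambda _ _ _ (⨆ x ∈ U, m x) _ _ fun x => ?_
    by_cases hx : x ∈ U
    · simp only [hx, if_true]
      exact Measurable.mono (comap_measurable fun ω : EnvOmega d => ω x)
        (le_iSup₂_of_le x hx le_rfl) le_rfl
    · simp only [hx, if_false]
      exact @measurable_const _ _ _ (⨆ x ∈ U, m x) _
  exact lintegral_mul_eq_lintegral_mul_lintegral_of_independent_measurableSpace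
    (iSup₂_le fun x _ => hle x) (iSup₂_le fun x _ => hle x)
    (indep_iSup_of_disjoint hle h.iIndep hST) (key S f hf hfS) (key T g hg hgT)

end IsIIDEnv

/-! ### The annealed law on paths -/

/-- The law of the path of the walk, restricted to environments in `A` (not normalised). -/
noncomputable def pathMeas {d : ℕ} (P : Measure (RWSpace d)) (A : Set (EnvOmega d)) : Measure (PathSpace d) :=
  (P.restrict (Prod.fst ⁻¹' A)).map Prod.snd

instance {d : ℕ} (P : Measure (RWSpace d)) [IsFiniteMeasure P] (A : Set (EnvOmega d)) :
    IsFiniteMeasure (pathMeas P A) := by unfold pathMeas; infer_instance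

/-- The path `x` up to time `n`, continued by the increments of `z`. -/
def glue {d : ℕ} (n : ℕ) (x z : PathSpace d) : PathSpace d :=
  fun k => if k ≤ n then x k else x n + z (k - n)

lemma glue_add {d : ℕ} (n : ℕ) (x z : PathSpace d) (hz : z 0 = 0) (j : ℕ) :
    glue n x z (n + j) = x n + z j := by
  rcases Nat.eq_zero_or_pos j with rfl | hj
  · simp [glue, hz]
  · simp [glue, hj.ne']

lemma reaches_of_pathWeight_pos {d : ℕ} {ω : EnvOmega d} {w : PathSpace d}
    (h : ∀ n, 0 < pathWeight ω n w) (m j : ℕ) : Reaches ω (w m) (w (m + j)) := by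
  induction j with
  | zero => exact Relation.ReflTransGen.refl
  | succ j ih =>
    refine Relation.ReflTransGen.tail ih ?_
    have h1 := h (m + j + 1)
    rw [pathWeight, Finset.prod_range_succ] at h1
    exact pos_of_mul_pos_right h1 (pathWeight_nonneg ω (m + j) w)

namespace IsRWRE

variable {d : ℕ} {μ : Measure (EnvDist d)} {P : Measure (RWSpace d)}

lemma pathMeas_cyl (hP : IsRWRE μ P) {A : Set (EnvOmega d)} (hA : MeasurableSet A) (n : ℕ)
    (x : PathSpace d) : pathMeas P A (cyl n x) =
      if x 0 = 0 then ∫⁻ ω in A, ENNReal.ofReal (pathWeight ω n x) ∂(P.map Prod.fst) else 0 := by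
  have := hP.1
  have := hP.2.1.2.1
  have h1 : pathMeas P A (cyl n x) = P {q | q.1 ∈ A ∧ ∀ k ≤ n, q.2 k = x k} := by
    rw [pathMeas, Measure.map_apply measurable_snd (measurableSet_cyl n x),
      Measure.restrict_apply (measurable_snd (measurableSet_cyl n x)), Set.inter_comm]
    rfl
  have h2 := hP.2.2 n x A hA
  rw [h1, ← ENNReal.ofReal_toReal (measure_ne_top P _), h2]
  split_ifs
  · rw [one_mul, ofReal_integral_eq_lintegral_ofReal]
    · refine Integrable.of_bound (measurable_pathWeight n x).aestronglyMeasurable 1 ?_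
      refine Eventually.of_forall fun ω => ?_
      rw [Real.norm_of_nonneg (pathWeight_nonneg _ _ _)]
      exact pathWeight_le_one _ _ _
    · exact Eventually.of_forall fun ω => pathWeight_nonneg _ _ _
  · simp

/-- An almost sure statement for the path law restricted to `A` holds `P`-almost surely on
environments in `A`. -/
lemma ae_of_pathMeas {A : Set (EnvOmega d)} (hA : MeasurableSet A) {p : PathSpace d → Prop}
    (h : ∀ᵐ w ∂(pathMeas P A), p w) : ∀ᵐ q ∂P, q.1 ∈ A → p q.2 := by
  have h1 := ae_of_ae_map measurable_snd.aemeasurable h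
  exact (ae_restrict_iff' (measurable_fst hA)).1 h1

/-- Almost surely the walk only uses edges of the directed graph. -/
lemma ae_pathWeight_pos (hP : IsRWRE μ P) : ∀ᵐ q ∂P, ∀ n, 0 < pathWeight q.1 n q.2 := by
  rw [ae_all_iff]
  intro n
  -- only the countably many paths that vanish after time `n` need be considered
  let ext : (Set.Iic n → Site d) → PathSpace d :=
    fun t k => if h : k ∈ Set.Iic n then t ⟨k, h⟩ else 0
  have hext : ∀ t : Set.Iic n → Site d,
      ∀ᵐ q ∂P, q.1 ∈ {ω : EnvOmega d | pathWeight ω n (ext t) = 0} → q.2 ∉ cyl n (ext t) := by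
    intro t
    have hA : MeasurableSet {ω : EnvOmega d | pathWeight ω n (ext t) = 0} :=
      measurable_pathWeight n (ext t) (measurableSet_singleton 0)
    refine ae_of_pathMeas hA (measure_eq_zero_iff_ae_notMem.1 ?_)
    rw [pathMeas_cyl hP hA]
    split_ifs
    · rw [setLIntegral_congr_fun hA (g := fun _ => 0)]
      · simp
      · intro ω hω
        simp [show pathWeight ω n (ext t) = 0 from hω]
    · rfl
  filter_upwards [ae_all_iff.2 hext] with q hq
  refine (pathWeight_nonneg _ _ _).lt_of_ne fun h0 => ?_
  have hk : ∀ k ≤ n, q.2 k = ext (fun k => q.2 k) k := fun k hk => by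
    simp [ext, hk]
  refine hq (fun k => q.2 k) ?_ hk
  rw [h0]
  exact (pathWeight_congr (fun _ _ => rfl) hk).symm

lemma ae_start (hP : IsRWRE μ P) : ∀ᵐ q ∂P, q.2 0 = 0 := by
  have h : ∀ s : Site d, ∀ᵐ q ∂P, s ≠ 0 → q.2 0 ≠ s := by
    intro s
    by_cases hs : s = 0
    · exact Eventually.of_forall fun q h => absurd hs h
    · have h0 : pathMeas P Set.univ (cyl 0 fun _ => s) = 0 := by
        rw [pathMeas_cyl hP MeasurableSet.univ, if_neg hs]
      filter_upwards [ae_of_pathMeas MeasurableSet.univ (measure_eq_zero_iff_ae_notMem.1 h0)]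
        with q hq _ hqs
      exact hq (Set.mem_univ _) fun k hk => by rw [Nat.le_zero.1 hk, hqs]
  filter_upwards [ae_all_iff.2 h] with q hq
  by_contra h0
  exact hq _ h0 rfl

/-- A site visited infinitely often passes this property on to its neighbours in the directed
graph. -/
lemma ae_frequently_step (hP : IsRWRE μ P) (x y : Site d) :
    ∀ᵐ q ∂P, 0 < (q.1 x).prob (y - x) → (∃ᶠ n in atTop, q.2 n = x) →
      ∃ᶠ n in atTop, q.2 n = y := by
  have := hP.1
  -- on environments where the step from `x` to `y` has probability at least `1 / (k + 1)`, each
  -- visit to `x` is followed by a visit to `y` with at least this conditional probability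
  have main : ∀ k n₀ : ℕ, ∀ᵐ q ∂P,
      q.1 ∈ {ω : EnvOmega d | 1 / ((k : ℝ) + 1) ≤ (ω x).prob (y - x)} →
      (∃ᶠ n in atTop, q.2 n = x) → ∃ n ≥ n₀, q.2 n = y := by
    intro k n₀
    set A := {ω : EnvOmega d | 1 / ((k : ℝ) + 1) ≤ (ω x).prob (y - x)} with hAdef
    have hA : MeasurableSet A :=
      ((measurable_prob _).comp (measurable_pi_apply x)) measurableSet_Ici
    have hpos : 0 < 1 / ((k : ℝ) + 1) := by positivity
    refine ae_of_pathMeas (P := P) hA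
      (p := fun w => (∃ᶠ n in atTop, w n = x) → ∃ n ≥ n₀, w n = y) ?_
    refine levy_path (pathMeas P A) {w | ∃ n ≥ n₀, w n = y} ?_ (fun n => {w | w n = x}) ?_
      (ENNReal.ofReal (1 / ((k : ℝ) + 1))) (by simpa using hpos) ENNReal.ofReal_ne_top n₀ ?_
    · have : {w : PathSpace d | ∃ n ≥ n₀, w n = y} =
          ⋃ n ∈ Set.Ici n₀, (fun w : PathSpace d => w n) ⁻¹' {y} := by
        ext w; simp
      rw [this]
      exact MeasurableSet.biUnion (Set.to_countable _)
        fun n _ => (measurable_pi_apply n) (measurableSet_singleton _)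
    · intro n w w' hw hx
      exact (hw n le_rfl).trans hx
    · intro n hn w hw
      have hw : w n = x := hw
      let w' : PathSpace d := Function.update w (n + 1) y
      have hw' : ∀ k ≤ n, w' k = w k := fun k hk =>
        Function.update_of_ne (by omega) _ _
      have hsub : cyl (n + 1) w' ⊆ {w | ∃ n ≥ n₀, w n = y} ∩ cyl n w := by
        intro u hu
        refine ⟨⟨n + 1, by omega, ?_⟩, fun k hk => ?_⟩
        · rw [hu _ le_rfl]; exact Function.update_self _ _ _
        · rw [hu k (by omega), hw' k hk]
      refine le_trans ?_ (measure_mono hsub)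
      rw [pathMeas_cyl hP hA, pathMeas_cyl hP hA, hw' 0 (Nat.zero_le _)]
      split_ifs
      · rw [← lintegral_const_mul _ (measurable_pathWeight n w).ennreal_ofReal]
        refine setLIntegral_mono' hA fun ω hω => ?_
        rw [← ENNReal.ofReal_mul hpos.le]
        refine ENNReal.ofReal_le_ofReal ?_
        rw [pathWeight, pathWeight, Finset.prod_range_succ, mul_comm]
        have h1 : w' (n + 1) = y := Function.update_self _ _ _
        rw [h1, hw' n le_rfl, hw]
        have h2 : ∏ k ∈ Finset.range n, (ω (w' k)).prob (w' (k + 1) - w' k) =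
            pathWeight ω n w :=
          pathWeight_congr (x := w') (fun _ _ => rfl) hw'
        rw [h2]
        exact mul_le_mul_of_nonneg_left hω (pathWeight_nonneg _ _ _)
      · simp
  filter_upwards [ae_all_iff.2 fun k => ae_all_iff.2 (main k)] with q hq hp hx
  obtain ⟨k, hk⟩ := exists_nat_one_div_lt hp
  rw [frequently_atTop]
  intro n₀
  obtain ⟨n, hn, hny⟩ := hq k n₀ hk.le hx
  exact ⟨n, hn, hny⟩

lemma ae_env {p : EnvOmega d → Prop} (h : ∀ᵐ ω ∂(P.map Prod.fst), p ω) : ∀ᵐ q ∂P, p q.1 :=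
  ae_of_ae_map measurable_fst.aemeasurable h

/-- If `C_o` is almost surely infinite, the walk visits infinitely many sites: otherwise some site
would be visited infinitely often, and with it its whole forward cluster. -/
lemma ae_range_infinite (hP : IsRWRE μ P)
    (hθ : (P.map Prod.fst) {ω : EnvOmega d | (clusterC ω 0).Infinite} = 1) :
    ∀ᵐ q ∂P, (Set.range q.2).Infinite := by
  have := hP.2.1.2.1
  have h0 : ∀ᵐ ω ∂(P.map Prod.fst), (clusterC ω 0).Infinite :=
    (mem_ae_iff_prob_eq_one (measurableSet_cluster_infinite 0)).2 hθ
  have hx : ∀ x : Site d, ∀ᵐ ω ∂(P.map Prod.fst), (clusterC ω x).Infinite := by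
    intro x
    have := (hP.2.1.measurePreserving_shift x).quasiMeasurePreserving.ae h0
    filter_upwards [this] with ω hω
    refine Set.Infinite.mono ?_ (hω.image (add_left_injective x).injOn)
    rintro _ ⟨y, hy, rfl⟩
    have := (reaches_shiftEnv x ω 0 y).1 hy
    rwa [zero_add] at this
  filter_upwards [ae_env (ae_all_iff.2 hx),
    ae_all_iff.2 fun x => ae_all_iff.2 fun y => ae_frequently_step hP x y] with q hinf hstep hfin
  obtain ⟨x, hx⟩ : ∃ x, ∃ᶠ n in atTop, q.2 n = x := by
    have : ∃ᶠ n in (atTop : Filter ℕ), ∃ x ∈ Set.range q.2, q.2 n = x :=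
      Frequently.of_forall fun n => ⟨_, ⟨n, rfl⟩, rfl⟩
    by_contra! hc
    have h2 : ∀ᶠ n in (atTop : Filter ℕ), ∀ x ∈ Set.range q.2, ¬ q.2 n = x :=
      (eventually_all_finite hfin).2 fun x _ => hc x
    obtain ⟨n, hn⟩ := h2.exists
    exact hn _ ⟨n, rfl⟩ rfl
  have key : ∀ y, Reaches q.1 x y → ∃ᶠ n in atTop, q.2 n = y := by
    intro y hy
    induction hy with
    | refl => exact hx
    | tail _ hbc ih => exact hstep _ _ hbc ih
  exact hinf x (hfin.subset fun y hy => (key y hy).exists)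

/-- When the walk stands at a strict record in direction `u`, a continuation that never uses
sites below this record meets only fresh environment, and is independent of the past. -/
lemma pathMeas_glue (hP : IsRWRE μ P) (u : Fin d → ℝ) (n m : ℕ) (x z : PathSpace d)
    (hx : ∀ j < n, dotR (x j) u < dotR (x n) u) (hz0 : z 0 = 0)
    (hz : ∀ j < m, 0 ≤ dotR (z j) u) :
    pathMeas P Set.univ (cyl (n + m) (glue n x z)) =
      pathMeas P Set.univ (cyl n x) * pathMeas P Set.univ (cyl m z) := by
  simp only [pathMeas_cyl hP MeasurableSet.univ, hz0, if_true, Measure.restrict_univ]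
  have h0 : glue n x z 0 = x 0 := by simp [glue]
  rw [h0]
  split_ifs
  swap
  · simp
  set ν := P.map Prod.fst
  have hW : ∀ ω, ENNReal.ofReal (pathWeight ω (n + m) (glue n x z)) =
      ENNReal.ofReal (pathWeight ω n x) *
        ENNReal.ofReal (pathWeight (shiftEnv (x n) ω) m z) := by
    intro ω
    rw [← ENNReal.ofReal_mul (pathWeight_nonneg _ _ _), pathWeight_add]
    congr 2
    · exact pathWeight_congr (fun _ _ => rfl) fun k hk => by simp [glue, hk]
    · simp only [pathWeight, glue_add n x z hz0, shiftEnv, add_comm (x n)]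
      simp
  have hshift := hP.2.1.measurePreserving_shift (x n)
  simp_rw [hW]
  rw [hP.2.1.lintegral_mul {y | dotR y u < dotR (x n) u} {y | dotR (x n) u ≤ dotR y u}]
  · congr 1
    exact hshift.lintegral_comp (measurable_pathWeight m z).ennreal_ofReal
  · rw [Set.disjoint_left]
    intro y h1 h2
    exact absurd (show dotR y u < dotR (x n) u from h1) (not_lt.2 h2)
  · exact (measurable_pathWeight n x).ennreal_ofReal
  · exact (measurable_pathWeight m z).ennreal_ofReal.comp hshift.measurable
  · intro ω ω' h
    rw [pathWeight_congr (fun k hk => h _ (hx k hk)) fun _ _ => rfl]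
  · intro ω ω' h
    rw [pathWeight_congr (ω := shiftEnv (x n) ω) (ω' := shiftEnv (x n) ω')
      (fun k hk => h _ ?_) fun _ _ => rfl]
    have := hz k hk
    change dotR (x n) u ≤ dotR (z k + x n) u
    rw [dotR_add]
    linarith

/-- At a strict record in direction `u`, the increments of the walk after the record have
conditional probability at least `P(B)` to lie in `B`, for an event `B` which depends on the
first `m` steps and forces the walk to stay above its starting level in direction `u`. -/
lemma restart (hP : IsRWRE μ P) (u : Fin d → ℝ) (n m : ℕ) (x : PathSpace d)
    (hx : ∀ j < n, dotR (x j) u < dotR (x n) u) (B : Set (PathSpace d)) (hBm : MeasurableSet B)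
    (hB : ∀ w w', w' ∈ cyl m w → w ∈ B → w' ∈ B)
    (hBu : ∀ w ∈ B, ∀ j < m, 0 ≤ dotR (w j) u) :
    pathMeas P Set.univ B * pathMeas P Set.univ (cyl n x) ≤
      pathMeas P Set.univ ({w | (fun j => w (n + j) - w n) ∈ B} ∩ cyl n x) := by
  set Q := pathMeas P Set.univ
  set f : PathSpace d → PathSpace d := fun w j => w (n + j) - w n
  have hf : Measurable f := measurable_pi_lambda _ fun j =>
    (measurable_pi_apply (n + j)).sub (measurable_pi_apply n)
  have key := le_of_cyl Q ((Q.restrict (cyl n x)).map f) m (Q (cyl n x)) B hB (fun z hz => by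
    by_cases hz0 : z 0 = 0
    · rw [← pathMeas_glue hP u n m x z hx hz0 (hBu z hz),
        Measure.map_apply hf (measurableSet_cyl m z),
        Measure.restrict_apply (hf (measurableSet_cyl m z))]
      refine measure_mono fun w hw => ⟨fun j hj => ?_, fun k hk => ?_⟩
      · have h1 := hw (n + j) (by omega)
        have h2 := hw n (by omega)
        rw [glue_add n x z hz0] at h1
        have h3 : glue n x z n = x n := by simp [glue]
        simp [f, h1, h2, h3]
      · rw [hw k (by omega)]; simp [glue, hk]
    · have : Q (cyl m z) = 0 := by
        simp only [Q]
        rw [pathMeas_cyl hP MeasurableSet.univ, if_neg hz0]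
      simp [this])
  rw [Measure.map_apply hf hBm, Measure.restrict_apply (hf hBm), mul_comm] at key
  exact key

/-- With positive probability the walk never goes below its starting level in direction `v`.
Some site `y` has a forward cluster which hardly goes below `y`, so by stationarity such a cluster
may be put at the endpoint of an upward step from the origin, whose own environment is
independent of that cluster. -/
lemma stay_above_pos (hP : IsRWRE μ P) (v : Fin d → ℝ)
    (ha : (P.map Prod.fst) {ω : EnvOmega d |
        ∃ N : ℕ, 1 ≤ N ∧ ∀ y ∈ clusterC ω 0, -(N : ℝ) ≤ dotR y v} = 1)
    (e : Site d) (hev : 0 < dotR e v) (hμ : 0 < μ {γ : EnvDist d | 0 < γ.prob e}) :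
    pathMeas P Set.univ {w | ∀ j, 0 ≤ dotR (w j) v} ≠ 0 := by
  set ν := P.map Prod.fst with hν
  have := hP.1
  have : IsProbabilityMeasure ν := hP.2.1.2.1
  have hμm : MeasurableSet {γ : EnvDist d | 0 < γ.prob e} := measurable_prob e measurableSet_Ioi
  obtain ⟨y, hy⟩ : ∃ y : Site d,
      ν {ω : EnvOmega d | ∀ z ∈ clusterC ω y, dotR y v - dotR e v < dotR z v} ≠ 0 := by
    by_contra! hc
    have h0 : ∀ᵐ ω ∂ν, ∀ y : Site d,
        ¬ ∀ z ∈ clusterC ω y, dotR y v - dotR e v < dotR z v :=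
      ae_all_iff.2 fun y => measure_eq_zero_iff_ae_notMem.1 (hc y)
    have hae : ∀ᵐ ω ∂ν, ∃ N : ℕ, 1 ≤ N ∧ ∀ y ∈ clusterC ω 0, -(N : ℝ) ≤ dotR y v := by
      exact (mem_ae_iff_prob_eq_one (measurableSet_cluster_bounded v)).2 ha
    -- a site `y` whose height is within `e·v` of the infimum over the cluster of the origin
    -- has the required cluster, as `C_y ⊆ C_o`
    obtain ⟨ω, hω, N, -, hN⟩ := (h0.and hae).exists
    set H : Set ℝ := (fun z => dotR z v) '' clusterC ω 0
    have hne : H.Nonempty := ⟨_, 0, Relation.ReflTransGen.refl, rfl⟩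
    have hbdd : BddBelow H := ⟨-(N : ℝ), by rintro _ ⟨z, hz, rfl⟩; exact hN z hz⟩
    obtain ⟨_, ⟨y, hy, rfl⟩, hlt⟩ := exists_lt_of_csInf_lt hne (lt_add_of_pos_right (sInf H) hev)
    refine hω y fun z hz => ?_
    have : sInf H ≤ dotR z v := csInf_le hbdd ⟨z, Relation.ReflTransGen.trans hy hz, rfl⟩
    simp only at hlt
    linarith
  have hshift := hP.2.1.measurePreserving_shift (y - e)
  set G : Set (EnvOmega d) := {ω | ∀ z ∈ clusterC ω e, 0 < dotR z v} with hGdef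
  have hGm : MeasurableSet G := measurableSet_cluster_forall e _
  have hG : ν G ≠ 0 := by
    rw [← hshift.measure_preimage hGm.nullMeasurableSet]
    refine ne_of_gt (lt_of_lt_of_le (pos_iff_ne_zero.2 hy) (measure_mono ?_))
    intro ω hω z hz
    have h1 := (reaches_shiftEnv (y - e) ω e z).1 hz
    rw [add_sub_cancel] at h1
    have h2 := hω _ h1
    have h3 : dotR (z + (y - e)) v + dotR e v = dotR z v + dotR y v := by
      rw [← dotR_add, ← dotR_add]; congr 1; abel
    linarith
  set F : Set (EnvOmega d) := (fun ω => ω 0) ⁻¹' {γ : EnvDist d | 0 < γ.prob e}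
  have hFm : MeasurableSet F := (measurable_pi_apply 0) hμm
  have hGcongr : ∀ ω ω' : EnvOmega d, (∀ x ∈ {y : Site d | 0 < dotR y v}, ω x = ω' x) →
      ω ∈ G → ω' ∈ G := by
    intro ω ω' h hω
    have hz : ∀ z, Reaches ω' e z → Reaches ω e z := by
      intro z hz
      induction hz with
      | refl => exact Relation.ReflTransGen.refl
      | tail _ hbc ih => exact Relation.ReflTransGen.tail ih (by rw [h _ (hω _ ih)]; exact hbc)
    exact fun z h' => hω z (hz z h')
  have hFG : ν (F ∩ G) ≠ 0 := by
    have := hP.2.1.lintegral_mul {0} {y | 0 < dotR y v} (by simp [dotR_zero])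
      (F.indicator 1) (G.indicator 1) (measurable_one.indicator hFm)
      (measurable_one.indicator hGm) (fun ω ω' h => by
        simp [F, Set.indicator, h 0 rfl]) (fun ω ω' h => by
        have : ω ∈ G ↔ ω' ∈ G :=
          ⟨hGcongr ω ω' h, hGcongr ω' ω fun x hx => (h x hx).symm⟩
        simp [Set.indicator, this])
    have h2 : ∀ ω : EnvOmega d, F.indicator (1 : EnvOmega d → ℝ≥0∞) ω * G.indicator 1 ω =
        (F ∩ G).indicator 1 ω := fun ω => by
      rw [Set.inter_indicator_one]; rfl
    simp_rw [h2] at this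
    rw [lintegral_indicator_one (hFm.inter hGm), lintegral_indicator_one hFm,
      lintegral_indicator_one hGm] at this
    rw [← hν] at this
    rw [this, hP.2.1.eval_apply 0 hμm]
    exact mul_ne_zero hμ.ne' hG
  have hAm : MeasurableSet (F ∩ G) := hFm.inter hGm
  let x : PathSpace d := fun k => if k = 0 then 0 else e
  have hpos : pathMeas P (F ∩ G) (cyl 1 x) ≠ 0 := by
    rw [pathMeas_cyl hP hAm, if_pos (by simp [x])]
    refine ne_of_gt ?_
    rw [setLIntegral_pos_iff (measurable_pathWeight 1 x).ennreal_ofReal]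
    refine lt_of_lt_of_le (pos_iff_ne_zero.2 hFG) (measure_mono fun ω hω => ⟨?_, hω⟩)
    have : 0 < (ω 0).prob e := hω.1
    simp [pathWeight, x, this]
  have hDm : MeasurableSet {w : PathSpace d | ∀ j, 0 ≤ dotR (w j) v} := by
    have : {w : PathSpace d | ∀ j, 0 ≤ dotR (w j) v} =
        ⋂ j, (fun w : PathSpace d => w j) ⁻¹' {z | 0 ≤ dotR z v} := by
      ext w; simp
    rw [this]
    exact MeasurableSet.iInter fun j => (measurable_pi_apply j) (MeasurableSet.of_discrete)
  refine ne_of_gt (lt_of_lt_of_le (pos_iff_ne_zero.2 hpos) ?_)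
  rw [pathMeas, pathMeas, Measure.map_apply measurable_snd (measurableSet_cyl 1 x),
    Measure.restrict_apply (measurable_snd (measurableSet_cyl 1 x)),
    Measure.map_apply measurable_snd hDm, Set.preimage_univ, Measure.restrict_univ]
  refine measure_mono_ae ?_
  filter_upwards [ae_pathWeight_pos hP] with q hq hqA j
  have hqx : ∀ k ≤ 1, q.2 k = x k := hqA.1
  rcases Nat.eq_zero_or_pos j with rfl | hj
  · rw [hqx 0 zero_le_one]; simp [x, dotR_zero]
  · have h1 := reaches_of_pathWeight_pos hq 1 (j - 1)
    rw [hqx 1 le_rfl, Nat.add_sub_cancel' hj] at h1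
    have hqG : q.1 ∈ G := hqA.2.2
    exact (hqG _ h1).le

/-! ### Climbing at records and staying above them -/

/-- The walk climbs any given number of steps `e` in a row at one of its records in a direction
`u` with `e·u ≥ 0`, if there are infinitely many of them. -/
lemma ae_climb (hP : IsRWRE μ P) (u : Fin d → ℝ) (e : Site d) (heu : 0 ≤ dotR e u)
    (hμ : 0 < μ {γ : EnvDist d | 0 < γ.prob e}) (m : ℕ) :
    ∀ᵐ q ∂P, (∃ᶠ n in atTop, ∀ j < n, dotR (q.2 j) u < dotR (q.2 n) u) →
      ∃ n, q.2 (n + m) = q.2 n + m • e := by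
  have := hP.1
  have hν : IsProbabilityMeasure (P.map Prod.fst) := hP.2.1.2.1
  set z : PathSpace d := fun j => j • e
  have hμm : MeasurableSet {γ : EnvDist d | 0 < γ.prob e} := measurable_prob e measurableSet_Ioi
  have hc0 : pathMeas P Set.univ (cyl m z) ≠ 0 := by
    rw [pathMeas_cyl hP MeasurableSet.univ, if_pos (by simp [z]), Measure.restrict_univ]
    refine ne_of_gt ?_
    rw [lintegral_pos_iff_support (measurable_pathWeight m z).ennreal_ofReal]
    have h1 := hP.2.1.2.2 ((Finset.range m).image z) (fun _ => {γ | 0 < γ.prob e})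
      fun _ _ => hμm
    have h2 : 0 < ∏ x ∈ (Finset.range m).image z, μ {γ : EnvDist d | 0 < γ.prob e} :=
      CanonicallyOrderedAdd.prod_pos.2 fun _ _ => hμ
    rw [← h1] at h2
    -- environments that allow each of the steps `e` give the climb positive weight
    refine lt_of_lt_of_le h2 (measure_mono fun ω hω => ?_)
    have : 0 < pathWeight ω m z := Finset.prod_pos fun k hk => by
      have h3 : 0 < (ω (z k)).prob e := hω (z k) (Finset.mem_image_of_mem z hk)
      have h4 : z (k + 1) - z k = e := by
        change (k + 1) • e - k • e = e
        rw [succ_nsmul, add_sub_cancel_left]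
      rw [h4]; exact h3
    simpa using this
  have key := levy_path (pathMeas P Set.univ) {w | ∃ n, w (n + m) = w n + m • e} ?_
    (fun n => {w | ∀ j < n, dotR (w j) u < dotR (w n) u}) ?_ _ hc0 (measure_ne_top _ _) 0 ?_
  · filter_upwards [ae_of_pathMeas (P := P) MeasurableSet.univ
      (p := fun w => (∃ᶠ n in atTop, ∀ j < n, dotR (w j) u < dotR (w n) u) →
      ∃ n, w (n + m) = w n + m • e) key] with q hq
    exact hq (Set.mem_univ _)
  · have : {w : PathSpace d | ∃ n, w (n + m) = w n + m • e} =
        ⋃ n, {w | w (n + m) = w n + m • e} := by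
      ext w; simp
    rw [this]
    exact MeasurableSet.iUnion fun n => measurableSet_eq_fun (measurable_pi_apply _)
      ((measurable_pi_apply n).add_const _)
  · intro n w w' hw h j hj
    rw [hw j hj.le, hw n le_rfl]
    exact h j hj
  · intro n _ x hx
    refine (restart hP u n m x hx (cyl m z) (measurableSet_cyl m z)
      (fun w w' h1 h2 k hk => (h1 k hk).trans (h2 k hk)) ?_).trans
      (measure_mono (Set.inter_subset_inter_left _ ?_))
    · intro w hw j hj
      rw [hw j hj.le, dotR_nsmul]
      positivity
    · intro w hw
      refine ⟨n, ?_⟩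
      have : w (n + m) - w n = m • e := hw m le_rfl
      rw [← this, add_sub_cancel]

/-- If the walk reaches arbitrarily many records above level `L` in direction `v`, it eventually
stays above `L`. -/
lemma ae_stay_above (hP : IsRWRE μ P) (v : Fin d → ℝ)
    (hc0 : pathMeas P Set.univ {w | ∀ j, 0 ≤ dotR (w j) v} ≠ 0) (L : ℝ) :
    ∀ᵐ q ∂P, (∃ᶠ n in atTop, (∀ j < n, dotR (q.2 j) v < dotR (q.2 n) v) ∧
      L ≤ dotR (q.2 n) v) → ∃ n, ∀ j, L ≤ dotR (q.2 (n + j)) v := by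
  have := hP.1
  have hm : ∀ (n : ℕ) (a : ℝ), MeasurableSet {w : PathSpace d | a ≤ dotR (w n) v} := fun n a =>
    (measurable_pi_apply (X := fun _ : ℕ => Site d) n) (t := {z | a ≤ dotR z v})
      MeasurableSet.of_discrete
  have key := levy_path (pathMeas P Set.univ) {w | ∃ n, ∀ j, L ≤ dotR (w (n + j)) v} ?_
    (fun n => {w | (∀ j < n, dotR (w j) v < dotR (w n) v) ∧ L ≤ dotR (w n) v}) ?_ _ hc0
    (measure_ne_top _ _) 0 ?_
  · filter_upwards [ae_of_pathMeas (P := P) MeasurableSet.univ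
      (p := fun w => (∃ᶠ n in atTop, (∀ j < n, dotR (w j) v < dotR (w n) v) ∧
        L ≤ dotR (w n) v) → ∃ n, ∀ j, L ≤ dotR (w (n + j)) v) key] with q hq
    exact hq (Set.mem_univ _)
  · have : {w : PathSpace d | ∃ n, ∀ j, L ≤ dotR (w (n + j)) v} =
        ⋃ n, ⋂ j, {w | L ≤ dotR (w (n + j)) v} := by
      ext w; simp
    rw [this]
    exact MeasurableSet.iUnion fun n => MeasurableSet.iInter fun j => hm _ _
  · rintro n w w' hw ⟨h, h'⟩
    refine ⟨fun j hj => ?_, ?_⟩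
    · rw [hw j hj.le, hw n le_rfl]
      exact h j hj
    · rwa [hw n le_rfl]
  · rintro n - x ⟨hx, hL⟩
    set Q := pathMeas P Set.univ
    -- the events that the walk stays above level `L` up to time `n + m`
    let T : ℕ → Set (PathSpace d) := fun m =>
      (⋂ j ∈ Set.Iio m, {w : PathSpace d | L ≤ dotR (w (n + j)) v}) ∩ cyl n x
    have hTm : ∀ m, MeasurableSet (T m) := fun m =>
      (MeasurableSet.biInter (Set.to_countable _) fun j _ => hm _ _).inter (measurableSet_cyl n x)
    have hTanti : Antitone T := fun a b hab =>
      Set.inter_subset_inter_left _ (Set.biInter_subset_biInter_left (Set.Iio_subset_Iio hab))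
    have hbound : ∀ m, Q {w | ∀ j, 0 ≤ dotR (w j) v} * Q (cyl n x) ≤ Q (T m) := by
      intro m
      set B : Set (PathSpace d) := {w | ∀ j < m, 0 ≤ dotR (w j) v}
      have hBm : MeasurableSet B := by
        have : B = ⋂ j ∈ Set.Iio m, {w : PathSpace d | 0 ≤ dotR (w j) v} := by
          ext w; simp [B]
        rw [this]
        exact MeasurableSet.biInter (Set.to_countable _) fun j _ => hm _ _
      have h1 := restart hP v n m x hx B hBm (fun w w' hw h j hj => by
        rw [hw j hj.le]; exact h j hj) (fun w hw => hw)
      refine le_trans ?_ (h1.trans (measure_mono ?_))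
      · refine mul_le_mul' (measure_mono ?_) le_rfl
        intro w hw j _
        exact hw j
      · rintro w ⟨hw, hwx⟩
        refine ⟨Set.mem_iInter₂.2 fun j hj => ?_, hwx⟩
        have h2 : 0 ≤ dotR (w (n + j) - w n) v := hw j hj
        have h3 : dotR (w (n + j)) v = dotR (w (n + j) - w n) v + dotR (w n) v := by
          rw [← dotR_add, sub_add_cancel]
        change L ≤ dotR (w (n + j)) v
        rw [h3, hwx n le_rfl] at *
        linarith
    have hlim := tendsto_measure_iInter_atTop (μ := Q) (fun m => (hTm m).nullMeasurableSet)
      hTanti ⟨0, measure_ne_top _ _⟩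
    refine (ge_of_tendsto' hlim hbound).trans (measure_mono ?_)
    intro w hw
    have hw := Set.mem_iInter.1 hw
    exact ⟨⟨n, fun j => Set.mem_iInter₂.1 (hw (j + 1)).1 j (Nat.lt_succ_self j)⟩, (hw 0).2⟩

end IsRWRE

/-- An unbounded real sequence has infinitely many strict records above any level. -/
lemma frequently_record (h : ℕ → ℝ) (hh : ¬ BddAbove (Set.range h)) (L : ℝ) :
    ∃ᶠ n in atTop, (∀ j < n, h j < h n) ∧ L ≤ h n := by
  rw [frequently_atTop]
  intro K
  obtain ⟨M, hM⟩ : BddAbove (h '' Set.Iic K ∪ {L}) :=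
    (((Set.finite_Iic K).image h).union (Set.finite_singleton L)).bddAbove
  have hex : ∃ n, M < h n := by
    by_contra! hc
    exact hh ⟨M, by rintro _ ⟨n, rfl⟩; exact hc n⟩
  have hn := Nat.find_spec hex
  refine ⟨Nat.find hex, ?_, fun j hj => ?_, ?_⟩
  · by_contra! hlt
    exact absurd (hM (Or.inl ⟨_, hlt.le, rfl⟩)) (not_le.2 hn)
  · exact (not_lt.1 (Nat.find_min hex hj)).trans_lt hn
  · exact (hM (Or.inr rfl)).trans hn.le

/-! ### Transience -/

/-- assume `θ₊ = 1` and that for some `v ≠ 0`: (a) ν-a.s. there is `N ≥ 1`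
with `C_o ∩ {y·v < -N} = ∅`, and (b) `μ(∃ e ∈ G_o, v·e > 0) > 0`. Then `P`-a.s.
`liminf X_n·v = ∞`, i.e. the walk is transient in direction `v`. -/
theorem stmt8 {d : ℕ} (hd : 2 ≤ d) (μ : Measure (EnvDist d))
    (P : Measure (RWSpace d)) (hP : IsRWRE μ P)
    (hθ : (P.map Prod.fst) {ω : EnvOmega d | (clusterC ω 0).Infinite} = 1)
    (v : Fin d → ℝ) (hv : v ≠ 0)
    (ha : (P.map Prod.fst) {ω : EnvOmega d |
        ∃ N : ℕ, 1 ≤ N ∧ ∀ y ∈ clusterC ω 0, -(N : ℝ) ≤ dotR y v} = 1)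
    (hb : 0 < μ {γ : EnvDist d |
        ∃ i : Fin d × Bool, 0 < γ.prob (stepVec d i) ∧ 0 < dotR (stepVec d i) v}) :
    P {q : RWSpace d | Tendsto (fun n => dotR (q.2 n) v) atTop atTop} = 1 := by
  have := hP.1
  have hν : IsProbabilityMeasure (P.map Prod.fst) := hP.2.1.2.1
  obtain ⟨⟨i₁, b⟩, hev, hμ⟩ : ∃ i : Fin d × Bool, 0 < dotR (stepVec d i) v ∧
      0 < μ {γ : EnvDist d | 0 < γ.prob (stepVec d i)} := by
    by_contra! hc
    refine hb.ne' (measure_mono_null (t := ⋃ i ∈ {i : Fin d × Bool | 0 < dotR (stepVec d i) v},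
      {γ : EnvDist d | 0 < γ.prob (stepVec d i)}) ?_ ?_)
    · rintro γ ⟨i, hi, hi'⟩
      exact Set.mem_iUnion₂.2 ⟨i, hi', hi⟩
    · exact (measure_biUnion_null_iff (Set.to_countable _)).2 fun i hi =>
        nonpos_iff_eq_zero.1 (hc i hi)
  set e := stepVec d (i₁, b)
  have hei : ∀ i ≠ i₁, e i = 0 := fun i hi => by
    simp only [e, stepVec]; split_ifs <;> simp [hi]
  have hv1 : v i₁ ≠ 0 := by
    intro h0
    refine hev.ne' (Finset.sum_eq_zero fun i _ => ?_)
    by_cases hi : i = i₁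
    · simp [hi, h0]
    · simp [hei i hi]
  -- `dir i s` is the direction of the `i`-th coordinate axis with orientation `s`
  let dir : Fin d → ℤˣ → Fin d → ℝ := fun i s => Pi.single i (((s : ℤ) : ℝ))
  have hdir : ∀ (x : Site d) i s, dotR x (dir i s) = x i * ((s : ℤ) : ℝ) := fun x i s => by
    simp [dotR, dir, Pi.single_apply]
  have hclimb : ∀ᵐ q ∂P, ∀ (i : Fin d) (s : ℤˣ) (m : ℕ), i ≠ i₁ →
      (∃ᶠ n in atTop, ∀ j < n, dotR (q.2 j) (dir i s) < dotR (q.2 n) (dir i s)) →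
      ∃ n, q.2 (n + m) = q.2 n + m • e := by
    refine ae_all_iff.2 fun i => ae_all_iff.2 fun s => ae_all_iff.2 fun m => ?_
    by_cases hi : i = i₁
    · exact Eventually.of_forall fun q h => absurd hi h
    · filter_upwards [hP.ae_climb (dir i s) e (by rw [hdir, hei i hi]; simp) hμ m] with q hq _
      exact hq
  have hstay := hP.stay_above_pos v ha e hev hμ
  have hlow : ∀ᵐ q ∂P, ∃ N : ℕ, 1 ≤ N ∧ ∀ y ∈ clusterC q.1 0, -(N : ℝ) ≤ dotR y v :=
    IsRWRE.ae_env (p := fun ω => ∃ N : ℕ, 1 ≤ N ∧ ∀ y ∈ clusterC ω 0, -(N : ℝ) ≤ dotR y v)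
      ((mem_ae_iff_prob_eq_one (measurableSet_cluster_bounded v)).2 ha)
  have hae : ∀ᵐ q ∂P, Tendsto (fun n => dotR (q.2 n) v) atTop atTop := by
    filter_upwards [hclimb, hlow, hP.ae_pathWeight_pos, hP.ae_start, hP.ae_range_infinite hθ,
      ae_all_iff.2 fun L : ℕ => hP.ae_stay_above v hstay L] with q hclimb hlow hpos h0 hinf hL
    obtain ⟨N, -, hN⟩ := hlow
    have hge : ∀ n, -(N : ℝ) ≤ dotR (q.2 n) v := fun n => by
      have := reaches_of_pathWeight_pos hpos 0 n
      rw [h0, zero_add] at this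
      exact hN _ this
    have hunb : ¬ BddAbove (Set.range fun n => dotR (q.2 n) v) := by
      rintro ⟨K, hK⟩
      have hK : ∀ n, dotR (q.2 n) v ≤ K := fun n => hK ⟨n, rfl⟩
      -- a coordinate other than `i₁` is bounded, as its records would trigger climbs so long that
      -- they leave the slab of heights between `-N` and `K`
      have hbd : ∀ i ≠ i₁, ∀ s : ℤˣ, BddAbove (Set.range fun n => dotR (q.2 n) (dir i s)) := by
        intro i hi s
        by_contra hub
        obtain ⟨m, hm⟩ := exists_nat_gt ((K + N) / dotR e v)
        obtain ⟨n, hn⟩ := hclimb i s m hi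
          ((frequently_record _ hub 0).mono fun n hn => hn.1)
        have h1 := hK (n + m)
        rw [hn, dotR_add, dotR_nsmul] at h1
        have h2 := hge n
        rw [div_lt_iff₀ hev] at hm
        linarith
      have habs : ∀ i ≠ i₁, ∃ M : ℝ, ∀ n, |((q.2 n i : ℤ) : ℝ)| ≤ M := by
        intro i hi
        obtain ⟨M₁, h1⟩ := hbd i hi 1
        obtain ⟨M₂, h2⟩ := hbd i hi (-1)
        refine ⟨max M₁ M₂, fun n => abs_le.2 ⟨?_, ?_⟩⟩
        · have := h2 ⟨n, rfl⟩
          simp only [hdir] at this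
          push_cast at this
          linarith [le_max_right M₁ M₂]
        · have := h1 ⟨n, rfl⟩
          simp only [hdir] at this
          push_cast at this
          linarith [le_max_left M₁ M₂]
      choose! M hM using habs
      -- the remaining coordinate is then bounded, because the height is
      set C : ℝ := (max |K| N + ∑ i ∈ Finset.univ.erase i₁, M i * |v i|) / |v i₁|
      have hC : ∀ n, |((q.2 n i₁ : ℤ) : ℝ)| ≤ C := by
        intro n
        rw [le_div_iff₀ (abs_pos.2 hv1), ← abs_mul]
        have h1 : dotR (q.2 n) v = (q.2 n i₁ : ℝ) * v i₁ +
            ∑ i ∈ Finset.univ.erase i₁, (q.2 n i : ℝ) * v i :=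
          (Finset.add_sum_erase _ _ (Finset.mem_univ i₁)).symm
        have h2 : |∑ i ∈ Finset.univ.erase i₁, (q.2 n i : ℝ) * v i| ≤
            ∑ i ∈ Finset.univ.erase i₁, M i * |v i| := by
          refine (Finset.abs_sum_le_sum_abs _ _).trans (Finset.sum_le_sum fun i hi => ?_)
          rw [abs_mul]
          exact mul_le_mul_of_nonneg_right (hM i (Finset.ne_of_mem_erase hi) n) (abs_nonneg _)
        have h3 : |dotR (q.2 n) v| ≤ max |K| N := by
          rw [abs_le]
          constructor
          · linarith [hge n, le_max_right |K| (N : ℝ)]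
          · linarith [hK n, le_max_left |K| (N : ℝ), le_abs_self K]
        have h4 : (q.2 n i₁ : ℝ) * v i₁ = dotR (q.2 n) v -
            ∑ i ∈ Finset.univ.erase i₁, (q.2 n i : ℝ) * v i := by rw [h1]; ring
        rw [h4]
        exact (abs_sub _ _).trans (add_le_add h3 h2)
      let B : Site d := fun i => ⌈if i = i₁ then C else M i⌉
      refine hinf ((Set.finite_Icc (-B) B).subset ?_)
      rintro _ ⟨n, rfl⟩
      have hB : ∀ i, |q.2 n i| ≤ B i := by
        intro i
        have : ((|q.2 n i| : ℤ) : ℝ) ≤ (B i : ℝ) := by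
          push_cast
          refine le_trans ?_ (Int.le_ceil _)
          split_ifs with hi
          · rw [hi]; exact hC n
          · exact hM i hi n
        exact_mod_cast this
      exact ⟨fun i => (abs_le.1 (hB i)).1, fun i => (abs_le.1 (hB i)).2⟩
    rw [tendsto_atTop]
    intro a
    obtain ⟨L, hLa⟩ := exists_nat_ge a
    obtain ⟨n, hn⟩ := hL L (frequently_record _ hunb L)
    filter_upwards [eventually_ge_atTop n] with k hk
    have := hn (k - n)
    rw [Nat.add_sub_cancel' hk] at this
    exact hLa.trans this
  rw [← measure_univ (μ := P)]
  exact measure_congr (eventuallyEq_univ.2 hae)
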